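/- Let S be a positive definite even unimodular 16×16 matrix. Then θ_S(τ) = E₈(τ) for all τ in the upper half-plane ℍ. -/

import Mathlib

open Complex Real Set
open scoped MatrixGroups Matrix

noncomputable section

/-- The upper half-plane, as a subset of `ℂ`. -/
def UHP : Set ℂ := {τ | 0 < τ.im}

/-- The subgroup `Γ∞ = {(a b; 0 d) ∈ SL₂(ℤ)}` of upper triangular matrices. -/
def GammaInf : Subgroup SL(2, ℤ) where
  carrier := {γ | γ.1 1 0 = 0}
  one_mem' := by simp
  mul_mem' := by
    intro x y hx hy
    have h := (Matrix.two_mul_expl x.1 y.1).2.2.1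
    simp only [Set.mem_setOf_eq] at *
    simp [Matrix.SpecialLinearGroup.coe_mul, h, hx, hy]
  inv_mem' := by
    intro x hx
    simp only [Set.mem_setOf_eq] at *
    rw [Matrix.SpecialLinearGroup.SL2_inv_expl x]
    simpa using hx

/-- The square `j(γ,τ)² = (cτ+d)²` of the automorphy factor, as a well-defined function on
the set `Γ∞\SL₂(ℤ)` of right cosets `Γ∞γ` (it is insensitive to the sign ambiguity
`(c,d) ↦ (-c,-d)` coming from left multiplication by `Γ∞`). -/
def jsq (τ : ℂ) : Quotient (QuotientGroup.rightRel GammaInf) → ℂ :=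
  Quotient.lift
    (fun γ : SL(2, ℤ) => (((γ.1 1 0 : ℤ) : ℂ) * τ + ((γ.1 1 1 : ℤ) : ℂ)) ^ 2)
    (by
      intro x y hxy
      have h : y * x⁻¹ ∈ GammaInf := QuotientGroup.rightRel_apply.mp hxy
      set η : SL(2, ℤ) := y * x⁻¹ with hη
      have hyx : y = η * x := by rw [hη]; group
      have hη10 : η.1 1 0 = 0 := h
      have h10 : y.1 1 0 = η.1 1 1 * x.1 1 0 := by
        have h2 := (Matrix.two_mul_expl η.1 x.1).2.2.1
        rw [hyx]
        simp only [Matrix.SpecialLinearGroup.coe_mul]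
        rw [h2, hη10]; ring
      have h11 : y.1 1 1 = η.1 1 1 * x.1 1 1 := by
        have h2 := (Matrix.two_mul_expl η.1 x.1).2.2.2
        rw [hyx]
        simp only [Matrix.SpecialLinearGroup.coe_mul]
        rw [h2, hη10]; ring
      have hdet : η.1 0 0 * η.1 1 1 = 1 := by
        have hd := η.2
        rw [Matrix.det_fin_two] at hd
        rw [hη10] at hd; linarith
      have hsq : (((η.1 1 1 : ℤ) : ℂ)) ^ 2 = 1 := by
        have hdet' : η.1 1 1 * η.1 0 0 = 1 := by linarith
        rcases Int.eq_one_or_neg_one_of_mul_eq_one hdet' with h1 | h1 <;>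
          rw [h1] <;> norm_num
      have hkey : ((y.1 1 0 : ℤ) : ℂ) * τ + ((y.1 1 1 : ℤ) : ℂ)
          = ((η.1 1 1 : ℤ) : ℂ) * (((x.1 1 0 : ℤ) : ℂ) * τ + ((x.1 1 1 : ℤ) : ℂ)) := by
        rw [h10, h11]; push_cast; ring
      show (((x.1 1 0 : ℤ) : ℂ) * τ + ((x.1 1 1 : ℤ) : ℂ)) ^ 2
          = (((y.1 1 0 : ℤ) : ℂ) * τ + ((y.1 1 1 : ℤ) : ℂ)) ^ 2
      rw [hkey, mul_pow, hsq, one_mul])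

/-- The weight-`w` Eisenstein series `E_w(τ) = ∑_{γ ∈ Γ∞\SL₂(ℤ)} j(γ,τ)^{-w}`
(for even `w`, written via `j(γ,τ)^{-w} = (j(γ,τ)²)^{-w/2}`). -/
def Ewt (w : ℕ) (τ : ℂ) : ℂ :=
  ∑' q : Quotient (QuotientGroup.rightRel GammaInf), jsq τ q ^ (-((w : ℤ) / 2))

/-- The weight-8 Eisenstein series `E₈`. -/
def E8 : ℂ → ℂ := Ewt 8


/-- `S ∈ M_m(ℤ)` is positive definite even unimodular: symmetric, positive definite (as a
real matrix), of determinant one, with all diagonal entries even. -/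
def IsPosDefEvenUnimodular {m : ℕ} (S : Matrix (Fin m) (Fin m) ℤ) : Prop :=
  S.IsSymm ∧ (S.map ((↑) : ℤ → ℝ)).PosDef ∧ S.det = 1 ∧ ∀ i, Even (S i i)

/-- The theta series `θ_S(τ) = ∑_{x ∈ ℤ^m} e^{πiτ xᵀSx}` of an integral matrix `S`. -/
def thetaSeries {m : ℕ} (S : Matrix (Fin m) (Fin m) ℤ) (τ : ℂ) : ℂ :=
  ∑' x : Fin m → ℤ, Complex.exp (π * I * τ * ((x ⬝ᵥ S.mulVec x : ℤ) : ℂ))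

section Poisson

open MeasureTheory UnitAddTorus

/-- The half-open unit cube in `ℝ^ι` with lower corner `x ∈ ℤ^ι`. -/
def unitCube {ι : Type*} (x : ι → ℤ) : Set (ι → ℝ) := {u | ∀ i, u i ∈ Ioc (x i : ℝ) (x i + 1)}

lemma measurableSet_unitCube {ι : Type*} [Fintype ι] (x : ι → ℤ) : MeasurableSet (unitCube x) := by
  have : unitCube x = Set.pi univ fun i => Ioc (x i : ℝ) (x i + 1) := by
    ext u; simp [unitCube]
  rw [this]
  exact MeasurableSet.univ_pi fun i => measurableSet_Ioc

lemma mem_unitCube_iff {ι : Type*} {x : ι → ℤ} {u : ι → ℝ} :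
    u ∈ unitCube x ↔ ∀ i, ⌈u i⌉ = x i + 1 := by
  simp [unitCube, Int.ceil_eq_iff]

lemma pairwise_disjoint_unitCube {ι : Type*} :
    Pairwise (Function.onFun Disjoint (unitCube (ι := ι))) := by
  intro x y hxy
  refine Set.disjoint_left.mpr fun u hx hy => hxy (funext fun i => ?_)
  have := mem_unitCube_iff.mp hx i
  have := mem_unitCube_iff.mp hy i
  omega

lemma iUnion_unitCube {ι : Type*} : ⋃ x : ι → ℤ, unitCube x = univ :=
  eq_univ_of_forall fun u =>
    mem_iUnion.mpr ⟨fun i => ⌈u i⌉ - 1, mem_unitCube_iff.mpr fun i => by ring⟩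

lemma hasSum_integral_unitCube {ι E : Type*} [Fintype ι] [NormedAddCommGroup E] [NormedSpace ℝ E]
    {g : (ι → ℝ) → E} (hg : Integrable g) :
    HasSum (fun x : ι → ℤ => ∫ u in unitCube 0, g (u + fun i => (x i : ℝ))) (∫ u, g u) := by
  have h := hasSum_integral_iUnion (f := g) (μ := volume) measurableSet_unitCube
    pairwise_disjoint_unitCube hg.integrableOn
  rw [iUnion_unitCube, setIntegral_univ] at h
  refine h.congr_fun fun x => ?_
  rw [← (measurePreserving_add_right volume fun i => (x i : ℝ)).setIntegral_preimage_emb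
    (MeasurableEquiv.addRight _).measurableEmbedding g (unitCube x)]
  congr 2
  ext u
  simp [unitCube, add_comm (_ : ℝ) 1]

lemma exists_torus_lift {ι : Type*} {G : (ι → ℝ) → ℂ} (hG : Continuous G)
    (hper : ∀ u (x : ι → ℤ), G (u + fun i => (x i : ℝ)) = G u) :
    ∃ F : C(UnitAddTorus ι, ℂ), ∀ u : ι → ℝ, F (fun i => (u i : UnitAddCircle)) = G u := by
  have hq : IsOpenQuotientMap
      (Pi.map fun (_ : ι) (t : ℝ) => (t : UnitAddCircle)) :=
    IsOpenQuotientMap.piMap fun _ => QuotientAddGroup.isOpenQuotientMap_mk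
  have hfac : Function.FactorsThrough G (Pi.map fun (_ : ι) (t : ℝ) => (t : UnitAddCircle)) := by
    intro u v huv
    have h : ∀ i, ∃ n : ℤ, n • (1 : ℝ) = u i - v i := fun i => by
      rw [← AddCircle.coe_eq_zero_iff, AddCircle.coe_sub, sub_eq_zero]
      exact congrFun huv i
    choose x hx using h
    rw [← hper v x]
    congr 1
    ext i
    have := hx i
    simp only [zsmul_eq_mul, mul_one] at this
    simp [this]
  obtain ⟨F, hF⟩ := (Function.factorsThrough_iff G).mp hfac
  exact ⟨⟨F, hq.isQuotientMap.continuous_iff.mpr (hF ▸ hG)⟩, fun u => (congrFun hF u).symm⟩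

lemma mFourier_coe {ι : Type*} [Fintype ι] (n : ι → ℤ) (u : ι → ℝ) :
    mFourier n (fun i => (u i : UnitAddCircle)) =
      Complex.exp (2 * π * I * ∑ i, (n i : ℂ) * u i) := by
  simp [mFourier, ← Complex.exp_sum, Finset.mul_sum, mul_assoc]

/-- **Poisson summation** for the lattice `ℤ^ι` in `ℝ^ι`. -/
theorem tsum_eq_tsum_fourierIntegral {ι : Type*} [Fintype ι] {f : (ι → ℝ) → ℂ} (hf : Integrable f)
    (hcont : Continuous fun u => ∑' x : ι → ℤ, f (u + fun i => (x i : ℝ)))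
    (hsum : Summable fun n : ι → ℤ =>
      ∫ u, Complex.exp (-(2 * π * I * ∑ i, (n i : ℂ) * u i)) * f u) :
    ∑' x : ι → ℤ, f (fun i => (x i : ℝ)) =
      ∑' n : ι → ℤ, ∫ u, Complex.exp (-(2 * π * I * ∑ i, (n i : ℂ) * u i)) * f u := by
  obtain ⟨F, hF⟩ := exists_torus_lift hcont (by
    intro u y
    rw [← (Equiv.addLeft y).tsum_eq fun x : ι → ℤ => f (u + fun i => (x i : ℝ))]
    congr! 3 with x
    ext i
    simp [add_assoc])
  have hcoeff : mFourierCoeff F = fun n : ι → ℤ =>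
      ∫ u, Complex.exp (-(2 * π * I * ∑ i, (n i : ℂ) * u i)) * f u := by
    ext n
    set g : (ι → ℝ) → ℂ := fun u => Complex.exp (-(2 * π * I * ∑ i, (n i : ℂ) * u i)) * f u
      with hg_def
    have hnorm : ∀ u : ι → ℝ, ‖Complex.exp (-(2 * π * I * ∑ i, (n i : ℂ) * u i))‖ = 1 := fun u => by
      have : -(2 * π * I * ∑ i, (n i : ℂ) * u i) =
          ((-(2 * π * ∑ i, (n i : ℝ) * u i) : ℝ) : ℂ) * I := by
        push_cast; ring
      rw [this, Complex.norm_exp_ofReal_mul_I]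
    have hg : Integrable g :=
      hf.bdd_mul (c := 1) (Continuous.aestronglyMeasurable (by fun_prop))
        (Filter.Eventually.of_forall fun u => (hnorm u).le)
    have hshift : ∀ (u : ι → ℝ) (x : ι → ℤ), g (u + fun i => (x i : ℝ)) =
        Complex.exp (-(2 * π * I * ∑ i, (n i : ℂ) * u i)) * f (u + fun i => (x i : ℝ)) := by
      intro u x
      simp only [hg_def]
      congr 1
      rw [Complex.exp_eq_exp_iff_exists_int]
      refine ⟨-∑ i, n i * x i, ?_⟩
      simp [mul_add, Finset.sum_add_distrib]
      ring
    rw [mFourierCoeff_eq_integral F n 0]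
    have hint : ∀ x : ι → ℤ, Integrable (fun u => g (u + fun i => (x i : ℝ)))
        (volume.restrict (unitCube 0)) := fun x => (hg.comp_add_right _).integrableOn
    rw [← (hasSum_integral_unitCube hg).tsum_eq,
      integral_tsum_of_summable_integral_norm hint (hasSum_integral_unitCube hg.norm).summable]
    have hcube : {u : ι → ℝ | ∀ i, u i ∈ Ioc ((0 : ι → ℝ) i) ((0 : ι → ℝ) i + 1)} = unitCube 0 := by
      simp [unitCube]
    rw [hcube]
    refine integral_congr_ae (Filter.Eventually.of_forall fun u => ?_)
    simp only [hF, hshift, tsum_mul_left, mFourier_coe, smul_eq_mul]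
    simp
  have h := hasSum_mFourier_series_apply_of_summable (f := F) (hcoeff ▸ hsum)
    (fun i => ((0 : ι → ℝ) i : UnitAddCircle))
  rw [hF] at h
  simp only [mFourier_coe, hcoeff] at h
  simpa using h.tsum_eq.symm

end Poisson

section Gaussian

open MeasureTheory

lemma summable_prod_fin_int {g : ℤ → ℝ} (hg : Summable g) (hg0 : ∀ k, 0 ≤ g k) (m : ℕ) :
    Summable fun x : Fin m → ℤ => ∏ i, g (x i) := by
  induction m with
  | zero => exact Summable.of_finite
  | succ m ih =>
    rw [← (Fin.consEquiv fun _ => ℤ).summable_iff]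
    refine (hg.mul_of_nonneg ih hg0 fun x => Finset.prod_nonneg fun i _ => hg0 _).congr fun p => ?_
    simp [Fin.prod_univ_succ]

lemma summable_exp_neg_mul_sq {c : ℝ} (hc : 0 < c) :
    Summable fun k : ℤ => Real.exp (-(c * (k : ℝ) ^ 2)) := by
  refine (summable_pow_mul_jacobiTheta₂_term_bound 0 (div_pos hc pi_pos) 0).congr fun k => ?_
  rw [pow_zero, one_mul]
  congr 1
  field_simp
  ring

lemma summable_exp_neg_mul_sum_sq {c : ℝ} (hc : 0 < c) (m : ℕ) :
    Summable fun x : Fin m → ℤ => Real.exp (-(c * ∑ i, (x i : ℝ) ^ 2)) := by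
  refine (summable_prod_fin_int (summable_exp_neg_mul_sq hc) (fun _ => (Real.exp_pos _).le)
    m).congr fun x => ?_
  rw [← Real.exp_sum, Finset.mul_sum, Finset.sum_neg_distrib]

open scoped MatrixOrder ComplexOrder in
lemma Matrix.PosDef.exists_eq_transpose_mul_self {n : Type*} [Fintype n] [DecidableEq n]
    {A : Matrix n n ℝ} (hA : A.PosDef) : ∃ B : Matrix n n ℝ, A = Bᵀ * B ∧ B.det ≠ 0 := by
  obtain ⟨B, hB⟩ := CStarAlgebra.nonneg_iff_eq_star_mul_self.mp hA.posSemidef.nonneg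
  rw [Matrix.star_eq_conjTranspose, Matrix.conjTranspose_eq_transpose_of_trivial] at hB
  refine ⟨B, hB, fun h => hA.det_pos.ne' ?_⟩
  rw [hB, Matrix.det_mul, h, mul_zero]

lemma dotProduct_transpose_mul_self_mulVec {m n : Type*} [Fintype m] [Fintype n]
    (B : Matrix m n ℝ) (u : n → ℝ) :
    u ⬝ᵥ (Bᵀ * B) *ᵥ u = ∑ i, (B *ᵥ u) i ^ 2 := by
  rw [← Matrix.mulVec_mulVec, Matrix.dotProduct_mulVec, Matrix.vecMul_transpose, dotProduct]
  simp_rw [sq]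

lemma sum_sq_mulVec_le {m n : Type*} [Fintype m] [Fintype n] (B : Matrix m n ℝ) (u : n → ℝ) :
    ∑ i, (B *ᵥ u) i ^ 2 ≤ (∑ i, ∑ j, B i j ^ 2) * ∑ j, u j ^ 2 := by
  rw [Finset.sum_mul]
  exact Finset.sum_le_sum fun i _ => Finset.sum_mul_sq_le_sq_mul_sq _ _ _

lemma Matrix.PosDef.exists_mul_sum_sq_le {n : Type*} [Fintype n] [DecidableEq n]
    {A : Matrix n n ℝ} (hA : A.PosDef) :
    ∃ c : ℝ, 0 < c ∧ ∀ u : n → ℝ, c * ∑ i, u i ^ 2 ≤ u ⬝ᵥ A *ᵥ u := by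
  obtain ⟨B, rfl, hB⟩ := hA.exists_eq_transpose_mul_self
  set K : ℝ := ∑ i, ∑ j, B⁻¹ i j ^ 2
  have hK : 0 ≤ K := by positivity
  refine ⟨(K + 1)⁻¹, by positivity, fun u => ?_⟩
  rw [dotProduct_transpose_mul_self_mulVec, inv_mul_le_iff₀ (by positivity)]
  have h := sum_sq_mulVec_le B⁻¹ (B *ᵥ u)
  rw [Matrix.mulVec_mulVec, Matrix.nonsing_inv_mul _ (isUnit_iff_ne_zero.mpr hB),
    Matrix.one_mulVec] at h
  refine h.trans ?_
  gcongr
  linarith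

lemma measurePreserving_mulVec {n : Type*} [Fintype n] [DecidableEq n]
    {B : Matrix n n ℝ} (hB : |B.det| = 1) :
    MeasurePreserving (fun u : n → ℝ => B *ᵥ u) := by
  have hB0 : B.det ≠ 0 := fun h => by simp [h] at hB
  refine ⟨by fun_prop, ?_⟩
  have h := Real.map_matrix_volume_pi_eq_smul_volume_pi hB0
  rw [abs_inv, hB, inv_one, ENNReal.ofReal_one, one_smul] at h
  exact h

lemma measurableEmbedding_mulVec {n : Type*} [Fintype n] [DecidableEq n]
    {B : Matrix n n ℝ} (hB : B.det ≠ 0) :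
    MeasurableEmbedding (fun u : n → ℝ => B *ᵥ u) :=
  have hB' : IsUnit B := B.isUnit_iff_isUnit_det.mpr (isUnit_iff_ne_zero.mpr hB)
  (Matrix.toLinearEquiv' B
    hB'.invertible).toContinuousLinearEquiv.toHomeomorph.measurableEmbedding

lemma norm_exp_pi_I_mul (τ : ℂ) (r : ℝ) :
    ‖Complex.exp (π * I * τ * r)‖ = Real.exp (-(π * τ.im * r)) := by
  rw [Complex.norm_exp]
  simp [mul_assoc]

lemma pi_div_neg_pi_I_mul {τ : ℂ} (hτ : τ ≠ 0) : (π : ℂ) / (-(π * I * τ)) = I / τ := by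
  field_simp
  simp

lemma integral_exp_quadraticForm {n : Type*} [Fintype n] [DecidableEq n]
    {B : Matrix n n ℝ} (hB : |B.det| = 1) {τ : ℂ} (hτ : 0 < τ.im) (w : n → ℝ) :
    Integrable (fun u : n → ℝ => Complex.exp (-(2 * π * I * ∑ i, (((Bᵀ *ᵥ w) i : ℝ) : ℂ) * u i)) *
      Complex.exp (π * I * τ * ((u ⬝ᵥ (Bᵀ * B) *ᵥ u : ℝ) : ℂ))) ∧
    ∫ u : n → ℝ, Complex.exp (-(2 * π * I * ∑ i, (((Bᵀ *ᵥ w) i : ℝ) : ℂ) * u i)) *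
      Complex.exp (π * I * τ * ((u ⬝ᵥ (Bᵀ * B) *ᵥ u : ℝ) : ℂ)) =
    (I / τ) ^ (Fintype.card n / 2 : ℂ) *
      Complex.exp (π * I * (-1 / τ) * ((∑ i, w i ^ 2 : ℝ) : ℂ)) := by
  have hτ0 : τ ≠ 0 := fun h => by simp [h] at hτ
  have hB0 : B.det ≠ 0 := fun h => by simp [h] at hB
  have hb : 0 < (-(π * I * τ)).re := by simp; positivity
  set c : n → ℂ := fun i => -(2 * π * I * w i)
  set g : (n → ℝ) → ℂ := fun v =>
    Complex.exp (-(-(π * I * τ)) * ∑ i, (v i : ℂ) ^ 2 + ∑ i, c i * v i)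
  have hg : (fun u : n → ℝ => Complex.exp (-(2 * π * I * ∑ i, (((Bᵀ *ᵥ w) i : ℝ) : ℂ) * u i)) *
      Complex.exp (π * I * τ * ((u ⬝ᵥ (Bᵀ * B) *ᵥ u : ℝ) : ℂ))) = fun u => g (B *ᵥ u) := by
    ext u
    have h : ∑ i, (Bᵀ *ᵥ w) i * u i = ∑ i, w i * (B *ᵥ u) i := by
      change (Bᵀ *ᵥ w) ⬝ᵥ u = w ⬝ᵥ B *ᵥ u
      rw [Matrix.dotProduct_mulVec, Matrix.mulVec_transpose]
    have h' : ∑ i, (((Bᵀ *ᵥ w) i : ℝ) : ℂ) * u i = ∑ i, (w i : ℂ) * ((B *ᵥ u) i : ℝ) :=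
      mod_cast h
    simp only [g, c]
    rw [← Complex.exp_add, h', dotProduct_transpose_mul_self_mulVec, add_comm]
    congr 1
    push_cast
    simp only [neg_neg, Finset.mul_sum, ← Finset.sum_neg_distrib]
    congr 2
    ext i
    ring
  have hmp := measurePreserving_mulVec hB
  rw [hg]
  refine ⟨hmp.integrable_comp_of_integrable
    (GaussianFourier.integrable_cexp_neg_mul_sum_add hb c), ?_⟩
  rw [hmp.integral_comp (measurableEmbedding_mulVec hB0) g,
    GaussianFourier.integral_cexp_neg_mul_sum_add hb c, pi_div_neg_pi_I_mul hτ0]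
  congr 2
  simp only [c]
  push_cast
  rw [Finset.sum_div, Finset.mul_sum]
  refine Finset.sum_congr rfl fun i _ => ?_
  field_simp
  ring

end Gaussian

section Theta

open MeasureTheory Filter Topology

lemma intCast_dotProduct_mulVec {n : Type*} [Fintype n] (S : Matrix n n ℤ) (x : n → ℤ) :
    ((x ⬝ᵥ S *ᵥ x : ℤ) : ℝ) =
      (fun i => (x i : ℝ)) ⬝ᵥ S.map ((↑) : ℤ → ℝ) *ᵥ fun i => (x i : ℝ) := by
  simp [dotProduct, Matrix.mulVec]

lemma norm_thetaSeries_term {m : ℕ} (S : Matrix (Fin m) (Fin m) ℤ) (x : Fin m → ℤ) (τ : ℂ) :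
    ‖Complex.exp (π * I * τ * ((x ⬝ᵥ S *ᵥ x : ℤ) : ℂ))‖ =
      Real.exp (-(π * τ.im * ((x ⬝ᵥ S *ᵥ x : ℤ) : ℝ))) := by
  rw [← norm_exp_pi_I_mul]
  simp

lemma dotProduct_mulVec_nonneg {m : ℕ} {S : Matrix (Fin m) (Fin m) ℤ}
    (hS : (S.map ((↑) : ℤ → ℝ)).PosDef) (x : Fin m → ℤ) :
    (0 : ℝ) ≤ ((x ⬝ᵥ S *ᵥ x : ℤ) : ℝ) := by
  obtain ⟨c, hc, hle⟩ := hS.exists_mul_sum_sq_le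
  rw [intCast_dotProduct_mulVec]
  exact le_trans (by positivity) (hle _)

lemma summable_exp_neg_quadraticForm {m : ℕ} {S : Matrix (Fin m) (Fin m) ℤ}
    (hS : (S.map ((↑) : ℤ → ℝ)).PosDef) {ε : ℝ} (hε : 0 < ε) :
    Summable fun x : Fin m → ℤ => Real.exp (-(π * ε * ((x ⬝ᵥ S *ᵥ x : ℤ) : ℝ))) := by
  obtain ⟨c, hc, hle⟩ := hS.exists_mul_sum_sq_le
  have hc' : 0 < π * ε * c := by positivity
  refine (summable_exp_neg_mul_sum_sq hc' m).of_nonneg_of_le (fun _ => (Real.exp_pos _).le)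
    fun x => Real.exp_le_exp.mpr (neg_le_neg ?_)
  rw [intCast_dotProduct_mulVec, mul_assoc (π * ε)]
  exact mul_le_mul_of_nonneg_left (hle _) (by positivity)

lemma summable_thetaSeries {m : ℕ} {S : Matrix (Fin m) (Fin m) ℤ}
    (hS : (S.map ((↑) : ℤ → ℝ)).PosDef) {τ : ℂ} (hτ : 0 < τ.im) :
    Summable fun x : Fin m → ℤ => Complex.exp (π * I * τ * ((x ⬝ᵥ S *ᵥ x : ℤ) : ℂ)) :=
  .of_norm <| (summable_exp_neg_quadraticForm hS hτ).congr fun x =>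
    (norm_thetaSeries_term S x τ).symm

lemma continuous_tsum_exp_quadraticForm {m : ℕ} {A : Matrix (Fin m) (Fin m) ℝ}
    (hA : A.PosDef) {τ : ℂ} (hτ : 0 < τ.im) :
    Continuous fun u : Fin m → ℝ => ∑' x : Fin m → ℤ, Complex.exp (π * I * τ *
      (((u + fun i => (x i : ℝ)) ⬝ᵥ A *ᵥ (u + fun i => (x i : ℝ)) : ℝ) : ℂ)) := by
  obtain ⟨c, hc, hle⟩ := hA.exists_mul_sum_sq_le
  set b := π * τ.im * c with hb_def
  have hb : 0 < b := by positivity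
  rw [continuous_iff_continuousAt]
  intro u₀
  set R := ∑ i, u₀ i ^ 2 + 1
  have hopen : IsOpen {u : Fin m → ℝ | ∑ i, u i ^ 2 < R} :=
    isOpen_lt (by fun_prop) continuous_const
  refine ContinuousOn.continuousAt (s := {u | ∑ i, u i ^ 2 < R}) ?_
    (hopen.mem_nhds (by simp [R]))
  refine continuousOn_tsum (u := fun x : Fin m → ℤ =>
    Real.exp (b * R) * Real.exp (-(b / 2 * ∑ i, (x i : ℝ) ^ 2))) (fun x => ?_)
    ((summable_exp_neg_mul_sum_sq (half_pos hb) m).mul_left _) fun x u hu => ?_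
  · refine Continuous.continuousOn ?_
    simp only [dotProduct, Matrix.mulVec]
    fun_prop
  · rw [norm_exp_pi_I_mul, ← Real.exp_add, Real.exp_le_exp]
    have h1 := mul_le_mul_of_nonneg_left (hle (u + fun i => (x i : ℝ)))
      (by positivity : 0 ≤ π * τ.im)
    have h2 : ∑ i, (x i : ℝ) ^ 2 ≤
        2 * ∑ i, (u + fun i => (x i : ℝ)) i ^ 2 + 2 * ∑ i, u i ^ 2 := by
      rw [Finset.mul_sum, Finset.mul_sum, ← Finset.sum_add_distrib]
      refine Finset.sum_le_sum fun i _ => ?_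
      simp only [Pi.add_apply]
      nlinarith [sq_nonneg (2 * u i + x i)]
    have h3 : ∑ i, u i ^ 2 ≤ R := le_of_lt hu
    rw [← mul_assoc, ← hb_def] at h1
    nlinarith

/-- Multiplication by a unimodular integral matrix, as a permutation of `ℤ^m`. -/
def mulVecEquiv {m : ℕ} (S : Matrix (Fin m) (Fin m) ℤ) (hS : S.det = 1) :
    (Fin m → ℤ) ≃ (Fin m → ℤ) where
  toFun x := S *ᵥ x
  invFun x := S⁻¹ *ᵥ x
  left_inv x := by
    show S⁻¹ *ᵥ (S *ᵥ x) = x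
    rw [Matrix.mulVec_mulVec, Matrix.nonsing_inv_mul _ (by simp [hS]), Matrix.one_mulVec]
  right_inv x := by
    show S *ᵥ (S⁻¹ *ᵥ x) = x
    rw [Matrix.mulVec_mulVec, Matrix.mul_nonsing_inv _ (by simp [hS]), Matrix.one_mulVec]

theorem thetaSeries_inversion {m : ℕ} {S : Matrix (Fin m) (Fin m) ℤ}
    (hS : (S.map ((↑) : ℤ → ℝ)).PosDef) (hdet : S.det = 1) {τ : ℂ} (hτ : 0 < τ.im) :
    thetaSeries S τ = (I / τ) ^ (m / 2 : ℂ) * thetaSeries S (-1 / τ) := by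
  have hτ' : 0 < (-1 / τ).im := by
    have : τ ≠ 0 := fun h => by simp [h] at hτ
    rw [neg_div, one_div, Complex.neg_im, Complex.inv_im, neg_div, neg_neg]
    exact div_pos hτ (Complex.normSq_pos.mpr this)
  obtain ⟨B, hB, -⟩ := hS.exists_eq_transpose_mul_self
  have hdetB : |B.det| = 1 := by
    have h : (S.map ((↑) : ℤ → ℝ)).det = 1 := by
      have := (Int.castRingHom ℝ).map_det S
      simpa [hdet] using this.symm
    rw [hB, Matrix.det_mul, Matrix.det_transpose, ← abs_mul_abs_self] at h
    nlinarith [abs_nonneg B.det]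
  set f : (Fin m → ℝ) → ℂ := fun u =>
    Complex.exp (π * I * τ * ((u ⬝ᵥ S.map ((↑) : ℤ → ℝ) *ᵥ u : ℝ) : ℂ)) with hf
  have hcoeff : ∀ y : Fin m → ℤ,
      ∫ u : Fin m → ℝ, Complex.exp (-(2 * π * I * ∑ i, ((mulVecEquiv S hdet y i : ℤ) : ℂ) * u i)) *
        f u =
      (I / τ) ^ (m / 2 : ℂ) *
        Complex.exp (π * I * (-1 / τ) * ((y ⬝ᵥ S *ᵥ y : ℤ) : ℂ)) := by
    intro y
    have h := (integral_exp_quadraticForm hdetB hτ (B *ᵥ fun i => (y i : ℝ))).2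
    rw [Matrix.mulVec_mulVec, ← dotProduct_transpose_mul_self_mulVec, ← hB,
      ← intCast_dotProduct_mulVec, Fintype.card_fin] at h
    have hy : ∀ i, (((S.map ((↑) : ℤ → ℝ) *ᵥ fun i => (y i : ℝ)) i : ℝ) : ℂ) =
        ((mulVecEquiv S hdet y i : ℤ) : ℂ) := fun i => by
      simp [mulVecEquiv, Matrix.mulVec, dotProduct]
    simp only [hy, Complex.ofReal_intCast] at h
    exact h
  have hint : Integrable f := by
    have h := (integral_exp_quadraticForm hdetB hτ 0).1
    simpa [← hB] using h
  have hsum : Summable fun n : Fin m → ℤ =>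
      ∫ u, Complex.exp (-(2 * π * I * ∑ i, (n i : ℂ) * u i)) * f u := by
    rw [← (mulVecEquiv S hdet).summable_iff]
    exact ((summable_thetaSeries hS hτ').mul_left _).congr fun y => (hcoeff y).symm
  have h := tsum_eq_tsum_fourierIntegral hint
    (continuous_tsum_exp_quadraticForm hS hτ) hsum
  rw [← (mulVecEquiv S hdet).tsum_eq fun n : Fin m → ℤ => ∫ u : Fin m → ℝ,
      Complex.exp (-(2 * π * I * ∑ i, (n i : ℂ) * u i)) * f u, tsum_congr hcoeff,
    tsum_mul_left] at h
  rw [thetaSeries, thetaSeries, ← h]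
  refine tsum_congr fun x => ?_
  simp only [hf]
  rw [← intCast_dotProduct_mulVec, Complex.ofReal_intCast]

lemma even_dotProduct_mulVec {n : Type*} [Fintype n] {S : Matrix n n ℤ} (hS : S.IsSymm)
    (heven : ∀ i, Even (S i i)) (x : n → ℤ) : Even (x ⬝ᵥ S *ᵥ x) := by
  rw [even_iff_two_dvd, ← Nat.cast_ofNat, ← ZMod.intCast_zmod_eq_zero_iff_dvd]
  simp only [dotProduct, Matrix.mulVec, Finset.mul_sum]
  rw [← Finset.sum_product', Int.cast_sum]
  refine Finset.sum_involution (fun p _ => (p.2, p.1)) (fun p _ => ?_) (fun p _ hp hpp => hp ?_)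
    (fun _ _ => by simp) (fun _ _ => rfl)
  · rw [hS.apply p.1 p.2, ← Int.cast_add, ZMod.intCast_zmod_eq_zero_iff_dvd]
    exact ⟨x p.1 * (S p.1 p.2 * x p.2), by push_cast; ring⟩
  · obtain ⟨i, j⟩ := p
    obtain rfl : j = i := congrArg Prod.fst hpp
    rw [ZMod.intCast_zmod_eq_zero_iff_dvd]
    exact ((heven j).two_dvd.mul_right _).mul_left _

lemma thetaSeries_add_one {m : ℕ} {S : Matrix (Fin m) (Fin m) ℤ} (hS : S.IsSymm)
    (heven : ∀ i, Even (S i i)) (τ : ℂ) : thetaSeries S (τ + 1) = thetaSeries S τ := by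
  refine tsum_congr fun x => ?_
  obtain ⟨k, hk⟩ := even_dotProduct_mulVec hS heven x
  rw [Complex.exp_eq_exp_iff_exists_int]
  refine ⟨k, ?_⟩
  rw [hk]
  push_cast
  ring

lemma differentiableOn_thetaSeries {m : ℕ} {S : Matrix (Fin m) (Fin m) ℤ}
    (hS : (S.map ((↑) : ℤ → ℝ)).PosDef) : DifferentiableOn ℂ (thetaSeries S) {τ | 0 < τ.im} := by
  intro τ₀ (hτ₀ : 0 < τ₀.im)
  have hopen : IsOpen {τ : ℂ | τ₀.im / 2 < τ.im} := isOpen_lt continuous_const Complex.continuous_im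
  refine ((Complex.differentiableOn_tsum_of_summable_norm
    (summable_exp_neg_quadraticForm hS (half_pos hτ₀)) (fun x => by fun_prop) hopen
    fun x τ hτ => ?_).differentiableAt (hopen.mem_nhds (half_lt_self hτ₀))).differentiableWithinAt
  rw [norm_thetaSeries_term, Real.exp_le_exp]
  have := dotProduct_mulVec_nonneg hS x
  have : τ₀.im / 2 < τ.im := hτ
  gcongr

lemma tendsto_thetaSeries_atImInfty {m : ℕ} {S : Matrix (Fin m) (Fin m) ℤ}
    (hS : (S.map ((↑) : ℤ → ℝ)).PosDef) :
    Tendsto (fun τ : UpperHalfPlane => thetaSeries S τ) UpperHalfPlane.atImInfty (𝓝 1) := by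
  classical
  have h1 : (1 : ℂ) = ∑' x : Fin m → ℤ, if x = 0 then 1 else 0 := by simp
  rw [h1]
  refine tendsto_tsum_of_dominated_convergence (summable_exp_neg_quadraticForm hS one_pos)
    (fun x => ?_) ?_
  · split_ifs with hx
    · simp [hx]
    · have hpos : (0 : ℝ) < ((x ⬝ᵥ S *ᵥ x : ℤ) : ℝ) := by
        rw [intCast_dotProduct_mulVec]
        have := hS.dotProduct_mulVec_pos (x := fun i => (x i : ℝ))
          (fun h => hx (funext fun i => by simpa using congrFun h i))
        simpa using this
      rw [tendsto_zero_iff_norm_tendsto_zero]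
      simp_rw [norm_thetaSeries_term]
      refine Real.tendsto_exp_neg_atTop_nhds_zero.comp ?_
      refine Tendsto.atTop_mul_const hpos (Tendsto.const_mul_atTop pi_pos ?_)
      exact tendsto_comap
  · have : ∀ᶠ τ : UpperHalfPlane in UpperHalfPlane.atImInfty, 1 ≤ τ.im :=
      tendsto_comap.eventually (eventually_ge_atTop 1)
    filter_upwards [this] with τ hτ x
    rw [norm_thetaSeries_term, Real.exp_le_exp]
    have := dotProduct_mulVec_nonneg hS x
    have : 1 ≤ (τ : ℂ).im := hτ
    gcongr

end Theta

section Eisenstein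

open EisensteinSeries UpperHalfPlane

lemma mul_inv_mem_GammaInf_iff {x y : SL(2, ℤ)} :
    y * x⁻¹ ∈ GammaInf ↔ y 1 0 * x 1 1 = y 1 1 * x 1 0 := by
  have h : (y * x⁻¹) 1 0 = y 1 0 * x 1 1 - y 1 1 * x 1 0 := by
    rw [Matrix.SpecialLinearGroup.coe_mul, (Matrix.two_mul_expl y.1 (x⁻¹).1).2.2.1,
      Matrix.SpecialLinearGroup.SL2_inv_expl x]
    simp
    ring
  change (y * x⁻¹) 1 0 = 0 ↔ _
  rw [h, sub_eq_zero]

lemma exists_units_smul_of_mul_inv_mem_GammaInf {x y : SL(2, ℤ)} (h : y * x⁻¹ ∈ GammaInf) :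
    ∃ ε : ℤˣ, ∀ j, y 1 j = ε * x 1 j := by
  set η := y * x⁻¹ with hη
  have hη0 : η 1 0 = 0 := h
  have hdet : η 1 1 * η 0 0 = 1 := by
    have := η.det_coe
    rw [Matrix.det_fin_two, hη0] at this
    linarith
  refine ⟨Units.mkOfMulEqOne _ _ hdet, fun j => ?_⟩
  have hy : y = η * x := by simp [hη]
  rw [hy, Matrix.SpecialLinearGroup.coe_mul, Matrix.mul_apply, Fin.sum_univ_two, hη0]
  simp

/-- The bottom row of the chosen representative of a coset in `Γ∞\SL₂(ℤ)`, up to a sign. -/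
def signedBottomRow (p : Quotient (QuotientGroup.rightRel GammaInf) × ℤˣ) : gammaSet 1 1 0 :=
  ⟨fun j => p.2 * p.1.out 1 j, by
    rw [mem_gammaSet_one]
    exact (isCoprime_mul_unit_left p.2.isUnit _ _).mpr (ModularGroup.bottom_row_coprime p.1.out)⟩

lemma signedBottomRow_bijective : Function.Bijective signedBottomRow := by
  constructor
  · rintro ⟨q, ε⟩ ⟨q', ε'⟩ h
    have hrow (j : Fin 2) : (ε : ℤ) * q.out 1 j = ε' * q'.out 1 j :=
      congrFun (congrArg Subtype.val h) j
    obtain rfl : q = q' := by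
      rw [← Quotient.out_equiv_out]
      refine QuotientGroup.rightRel_apply.mpr (mul_inv_mem_GammaInf_iff.mpr ?_)
      refine mul_left_cancel₀ (mul_ne_zero ε.ne_zero ε'.ne_zero) ?_
      linear_combination ε * q.out 1 1 * -hrow 0 + ε * q.out 1 0 * hrow 1
    have hne : ¬ (q.out 1 0 = 0 ∧ q.out 1 1 = 0) := fun h0 => by
      have := ModularGroup.bottom_row_coprime q.out
      rw [h0.1, h0.2] at this
      exact not_isCoprime_zero_zero this
    rw [Prod.mk.injEq]
    refine ⟨rfl, Units.ext ?_⟩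
    by_cases h0 : q.out 1 0 = 0
    · exact mul_right_cancel₀ (fun h1 => hne ⟨h0, h1⟩) (hrow 1)
    · exact mul_right_cancel₀ h0 (hrow 0)
  · rintro ⟨v, hv⟩
    obtain ⟨g, hg0, hg1⟩ := ((mem_gammaSet_one v).mp hv).exists_SL2_row 1
    obtain ⟨ε, hε⟩ := exists_units_smul_of_mul_inv_mem_GammaInf
      (QuotientGroup.rightRel_apply.mp (Quotient.mk_out (s := QuotientGroup.rightRel GammaInf) g))
    refine ⟨(⟦g⟧, ε), Subtype.ext (funext fun j => ?_)⟩
    change (ε : ℤ) * (⟦g⟧ : Quotient (QuotientGroup.rightRel GammaInf)).out 1 j = v j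
    rw [← hε]
    fin_cases j
    exacts [hg0, hg1]

lemma eisSummand_signedBottomRow {w : ℕ} (hw : Even w)
    (p : Quotient (QuotientGroup.rightRel GammaInf) × ℤˣ) (z : ℍ) :
    eisSummand w (signedBottomRow p) z = jsq z p.1 ^ (-((w : ℤ) / 2)) := by
  obtain ⟨k, rfl⟩ := hw
  obtain ⟨q, ε⟩ := p
  have hjsq : jsq z q = (((q.out 1 0 : ℤ) : ℂ) * z + ((q.out 1 1 : ℤ) : ℂ)) ^ 2 := by
    conv_lhs => rw [← q.out_eq]
    rfl
  have hε : (((ε : ℤ) : ℂ)) ^ 2 = 1 := by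
    rw [← Int.cast_pow, ← Units.val_pow_eq_pow_val, Int.units_sq, Units.val_one, Int.cast_one]
  have hk : -(((k + k : ℕ) : ℤ)) = 2 * -(k : ℤ) := by push_cast; ring
  have hk' : -(((k + k : ℕ) : ℤ) / 2) = -(k : ℤ) := by lia
  rw [hk', hjsq, eisSummand, hk, zpow_mul]
  congr 1
  simp only [signedBottomRow, Int.cast_mul, zpow_ofNat]
  linear_combination
    (((q.out 1 0 : ℤ) : ℂ) * z + ((q.out 1 1 : ℤ) : ℂ)) ^ 2 * hε

theorem Ewt_eq_E {w : ℕ} (hw : 3 ≤ w) (heven : Even w) (z : ℍ) :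
    Ewt w z = ModularForm.E hw z := by
  have hE : ModularForm.E hw z = (1 / 2 : ℂ) * ∑' v : gammaSet 1 1 0, eisSummand w v z := rfl
  have hsum : Summable fun v : gammaSet 1 1 0 => eisSummand w v z :=
    (summable_eisSummand hw z).subtype _
  let e := Equiv.ofBijective _ signedBottomRow_bijective
  have hsum' : Summable fun p => eisSummand w (e p) z := e.summable_iff.mpr hsum
  rw [hE, ← e.tsum_eq fun v : gammaSet 1 1 0 => eisSummand w v z, hsum'.tsum_prod, Ewt,
    ← tsum_mul_left]
  refine tsum_congr fun q => ?_
  have h (ε : ℤˣ) : eisSummand w (e (q, ε)) z = jsq z q ^ (-((w : ℤ) / 2)) :=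
    eisSummand_signedBottomRow heven (q, ε) z
  simp [h]

end Eisenstein

section ModularForm

open UpperHalfPlane Filter Topology ModularForm

lemma thetaSeries_slash {S : Matrix (Fin 16) (Fin 16) ℤ} (hS : IsPosDefEvenUnimodular S)
    (γ : SL(2, ℤ)) :
    (fun τ : ℍ => thetaSeries S τ) ∣[(8 : ℤ)] γ = fun τ : ℍ => thetaSeries S τ := by
  obtain ⟨hsymm, hpos, hdet, heven⟩ := hS
  refine SlashInvariantForm.slash_action_generators_SL2Z ?_ ?_ γ
  · ext z
    rw [SlashInvariantForm.slash_S_apply, thetaSeries_inversion hpos hdet z.im_pos]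
    have hexp : (((16 : ℕ) : ℂ) / 2) = ((8 : ℕ) : ℂ) := by norm_num
    rw [hexp, Complex.cpow_natCast, div_pow, show Complex.I ^ 8 = 1 by
      rw [show 8 = 4 * 2 by norm_num, pow_mul, Complex.I_pow_four, one_pow], mul_comm]
    congr 1
    · simp [zpow_neg]
    · simp [neg_div]
  · ext z
    rw [SL_slash_apply, modular_T_smul, ModularGroup.denom_apply]
    simp [ModularGroup.T, add_comm (1 : ℂ), thetaSeries_add_one hsymm heven]

/-- The theta series of an even unimodular lattice of rank `16`, as a level one modular form. -/
def thetaModularForm {S : Matrix (Fin 16) (Fin 16) ℤ} (hS : IsPosDefEvenUnimodular S) :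
    ModularForm 𝒮ℒ ((8 : ℕ) : ℤ) where
  toFun τ := thetaSeries S τ
  slash_action_eq' := fun _ ⟨γ, hγ⟩ => hγ ▸ thetaSeries_slash hS γ
  holo' := by
    rw [UpperHalfPlane.mdifferentiable_iff]
    refine (differentiableOn_thetaSeries hS.2.1).congr fun z hz => ?_
    simp [ofComplex_apply_of_im_pos hz]
  bdd_at_cusps' {c} hc := by
    rw [Subgroup.IsArithmetic.isCusp_iff_isCusp_SL2Z] at hc
    rw [OnePoint.isBoundedAt_iff_forall_SL2Z hc]
    intro γ _
    exact (thetaSeries_slash hS γ).symm ▸ (tendsto_thetaSeries_atImInfty hS.2.1).isBigO_one ℝ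

lemma thetaModularForm_qExpansion_coeff_zero {S : Matrix (Fin 16) (Fin 16) ℤ}
    (hS : IsPosDefEvenUnimodular S) : (qExpansion 1 (thetaModularForm hS)).coeff 0 = 1 := by
  rw [UpperHalfPlane.qExpansion_coeff_zero one_pos
    (ModularFormClass.analyticAt_cuspFunction_zero _ one_pos one_mem_strictPeriods_SL)
    (SlashInvariantFormClass.periodic_comp_ofComplex _ one_mem_strictPeriods_SL)]
  exact (tendsto_thetaSeries_atImInfty hS.2.1).limUnder_eq

theorem thetaModularForm_eq_E {S : Matrix (Fin 16) (Fin 16) ℤ} (hS : IsPosDefEvenUnimodular S) :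
    thetaModularForm hS = E (by norm_num : 3 ≤ 8) := by
  rw [← sub_eq_zero]
  apply sturm_bound_levelOne_nat
  have h0 : (qExpansion 1 (thetaModularForm hS - E (by norm_num : 3 ≤ 8))).coeff 0 = 0 := by
    rw [ModularForm.qExpansion_sub one_pos one_mem_strictPeriods_SL, map_sub,
      thetaModularForm_qExpansion_coeff_zero,
      EisensteinSeries.E_qExpansion_coeff_zero _ ⟨4, rfl⟩, sub_self]
  refine lt_of_lt_of_le (by norm_num) (PowerSeries.nat_le_order _ 1 fun i hi => ?_)
  obtain rfl : i = 0 := by lia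
  exact h0

end ModularForm

/-- For every positive definite even unimodular `16 × 16` matrix `S`, the theta series
`θ_S` equals the weight-8 Eisenstein series `E₈` on the upper half-plane. -/
theorem thetaSeries_sixteen_eq_E8 (S : Matrix (Fin 16) (Fin 16) ℤ)
    (hS : IsPosDefEvenUnimodular S) :
    ∀ τ ∈ UHP, thetaSeries S τ = E8 τ := by
  intro τ hτ
  have h : thetaSeries S τ = ModularForm.E (by norm_num : 3 ≤ 8) ⟨τ, hτ⟩ :=
    DFunLike.congr_fun (thetaModularForm_eq_E hS) (⟨τ, hτ⟩ : UpperHalfPlane)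
  rw [h, ← Ewt_eq_E _ ⟨4, rfl⟩, E8]

end
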